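/- Let ρ be a real random variable on a probability space satisfying the log-Metropolis–Hastings-ratio symmetry, and suppose E[ρ²] < ∞. Then E[ρ] + (1/2)·E[ρ²] = E[ρ² · ∫₀^{1/2} (1 − e^{tρ}) dt]. -/

import Mathlib

open MeasureTheory

/-- A real random variable `ρ` on a probability space satisfies the
log-Metropolis–Hastings-ratio symmetry if for every measurable `f : ℝ → ℝ` with
`E[|f(ρ)|] < ∞` one has `E[f(-ρ) e^ρ] = E[f(ρ)]`. -/
def LMHRSymmetric {Ω : Type*} [MeasurableSpace Ω] (P : Measure Ω) (ρ : Ω → ℝ) : Prop :=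
  ∀ f : ℝ → ℝ, Measurable f → Integrable (fun ω => f (ρ ω)) P →
    ∫ ω, f (-ρ ω) * Real.exp (ρ ω) ∂P = ∫ ω, f (ρ ω) ∂P

/-- If `ρ` satisfies the log-Metropolis–Hastings-ratio symmetry and `E[ρ²] < ∞`, then
`E[ρ] + (1/2) E[ρ²] = E[ρ² ∫₀^{1/2} (1 - e^{tρ}) dt]`. -/
theorem stmt2 {Ω : Type*} [MeasurableSpace Ω] (P : Measure Ω) [IsProbabilityMeasure P]
    (ρ : Ω → ℝ) (hρ : Measurable ρ) (hsymm : LMHRSymmetric P ρ)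
    (h2 : Integrable (fun ω => (ρ ω) ^ 2) P) :
    (∫ ω, ρ ω ∂P) + (1 / 2) * ∫ ω, (ρ ω) ^ 2 ∂P
      = ∫ ω, (ρ ω) ^ 2 * (∫ t in (0 : ℝ)..(1 / 2), (1 - Real.exp (t * ρ ω))) ∂P := by
  have hA : Integrable (fun ω => (ρ ω) ^ 2 * Real.exp (ρ ω)) P := by
    by_contra hn
    have h := hsymm (fun x => x ^ 2) (by fun_prop) h2
    simp only [neg_sq] at h
    rw [integral_undef hn] at h
    have h0 := (integral_eq_zero_iff_of_nonneg (fun ω => sq_nonneg (ρ ω)) h2).1 h.symm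
    apply hn
    refine (integrable_zero Ω ℝ P).congr ?_
    filter_upwards [h0] with ω hω
    have hω' : ρ ω ^ 2 = 0 := hω
    simp [hω']
  have hB : Integrable (fun ω => ρ ω * Real.exp (ρ ω / 2)) P := by
    refine ((integrable_const (1 : ℝ)).add hA).mono' (by fun_prop) ?_
    filter_upwards with ω
    have he : Real.exp (ρ ω) = Real.exp (ρ ω / 2) ^ 2 := by
      rw [← Real.exp_nat_mul]; congr 1; push_cast; ring
    simp only [Pi.add_apply, Real.norm_eq_abs]
    rw [he, ← mul_pow, ← sq_abs (ρ ω * Real.exp (ρ ω / 2))]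
    nlinarith [sq_nonneg (|ρ ω * Real.exp (ρ ω / 2)| - 1), sq_nonneg (|ρ ω * Real.exp (ρ ω / 2)|)]
  have hC : Integrable ρ P := by
    refine ((integrable_const (1 : ℝ)).add h2).mono' (by fun_prop) ?_
    filter_upwards with ω
    simp only [Pi.add_apply, Real.norm_eq_abs]
    rw [← sq_abs (ρ ω)]
    nlinarith [sq_nonneg (|ρ ω| - 1), sq_nonneg (|ρ ω|)]
  have hD : ∫ ω, ρ ω * Real.exp (ρ ω / 2) ∂P = 0 := by
    have h := hsymm (fun x => x * Real.exp (x / 2)) (by fun_prop) hB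
    have he : ∀ ω, -ρ ω * Real.exp (-ρ ω / 2) * Real.exp (ρ ω)
        = -(ρ ω * Real.exp (ρ ω / 2)) := by
      intro ω
      rw [mul_assoc, ← Real.exp_add, show -ρ ω / 2 + ρ ω = ρ ω / 2 by ring]
      ring
    simp only [he] at h
    rw [integral_neg] at h
    linarith
  have hE : ∀ ω, (ρ ω) ^ 2 * (∫ t in (0 : ℝ)..(1 / 2), (1 - Real.exp (t * ρ ω)))
      = (ρ ω + (1 / 2) * (ρ ω) ^ 2) - ρ ω * Real.exp (ρ ω / 2) := by
    intro ω
    by_cases h0 : ρ ω = 0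
    · simp [h0]
    · rw [intervalIntegral.integral_sub (by simp)
        (Continuous.intervalIntegrable (by fun_prop) _ _),
        intervalIntegral.integral_comp_mul_right (fun x => Real.exp x) h0, integral_exp]
      simp only [intervalIntegral.integral_const, smul_eq_mul, zero_mul, Real.exp_zero]
      rw [show 1 / 2 * ρ ω = ρ ω / 2 by ring]
      field_simp
      ring
  simp only [hE]
  have hF : Integrable (fun ω => ρ ω + (1 / 2) * (ρ ω) ^ 2) P := hC.add (h2.const_mul _)
  rw [integral_sub hF hB, integral_add hC (h2.const_mul _), hD,
    integral_const_mul, sub_zero]
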